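/- Let n₁ and n₂ be nonzero integers with n := n₁ + n₂ ≠ 0, let f be the function f(y) = (32π·σ₂(|n₁|)·σ₂(|n₂|)) / (3·|n₁n₂|·|n|⁵) · ∑_{i,j ∈ {0,1}} q^{ij}(π|n|y)·K_i(2π|n₁|y)·K_j(2π|n₂|y), where q⁰⁰(z) = sgn(n₁n₂)·( −4z·n₁n₂·(n₁² + n₂² − 6n₁n₂) − (30/z)·n₁n₂·(n₁ − n₂)² ), q⁰¹(z) = ε₁·( −n₁·(13n₁²n₂ − 65n₁n₂² + n₁³ + 19n₂³) + (30/z²)·n₁n₂²·(n₁ − n₂) ) with ε₁ = 1 if n₁n₂ > 0 and ε₁ = sgn(n₁)·sgn(n₁+n₂) if n₁n₂ < 0, q¹⁰(z) = ε₂·( −n₂·(13n₂²n₁ − 65n₂n₁² + n₂³ + 19n₁³) + (30/z²)·n₂n₁²·(n₂ − n₁) ) with ε₂ = 1 if n₁n₂ > 0 and ε₂ = sgn(n₂)·sgn(n₁+n₂) if n₁n₂ < 0, and q¹¹(z) = −4z·n₁n₂·(n₁² + n₂² − 6n₁n₂) − (14n₁³n₂ − 94n₁²n₂² + 14n₁n₂³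 + n₁⁴ + n₂⁴)/z. Set α = sgn(n₁+n₂)·(128π·σ₂(|n₁|)·σ₂(|n₂|)) / (45·n₁²·n₂²·|n₁+n₂|^{7/2}) · ( n₁⁵ + n₂⁵ + 15n₁⁴n₂ + 15n₁n₂⁴ − 80n₁³n₂² − 80n₁²n₂³ + 60n₁²n₂²·(n₁ − n₂)·log|n₁/n₂| ). Then the function g(y) = f(y) + α·√y·K_{7/2}(2π|n|y) satisfies: g(y) − 8·σ₂(|n₁|)·σ₂(|n₂|)/(5·n₁²·n₂²·y) remains bounded as y → 0⁺. -/

import Mathlib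

open Real

/-- Modified Bessel function `K₀`. -/
noncomputable def K0 (x : ℝ) : ℝ := ∫ t in Set.Ioi (0 : ℝ), Real.exp (-x * Real.cosh t)

/-- Modified Bessel function `K₁`. -/
noncomputable def K1 (x : ℝ) : ℝ :=
  ∫ t in Set.Ioi (0 : ℝ), Real.exp (-x * Real.cosh t) * Real.cosh t

/-- Divisor sum `σ₂(m) = ∑_{d ∣ m} d²`. -/
def sigma2 (m : ℕ) : ℕ := ∑ d ∈ m.divisors, d ^ 2

/-- The coefficient `q⁰⁰`. -/
noncomputable def q00 (n₁ n₂ : ℤ) (z : ℝ) : ℝ :=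
  ((n₁ * n₂).sign : ℝ) *
    (-4 * z * ((n₁ : ℝ) * n₂) * ((n₁ : ℝ) ^ 2 + (n₂ : ℝ) ^ 2 - 6 * n₁ * n₂) -
      30 / z * ((n₁ : ℝ) * n₂) * ((n₁ : ℝ) - n₂) ^ 2)

/-- The sign `ε₁`. -/
noncomputable def eps1 (n₁ n₂ : ℤ) : ℝ :=
  if 0 < n₁ * n₂ then 1 else ((n₁.sign * (n₁ + n₂).sign : ℤ) : ℝ)

/-- The sign `ε₂`. -/
noncomputable def eps2 (n₁ n₂ : ℤ) : ℝ :=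
  if 0 < n₁ * n₂ then 1 else ((n₂.sign * (n₁ + n₂).sign : ℤ) : ℝ)

/-- The coefficient `q⁰¹`. -/
noncomputable def q01 (n₁ n₂ : ℤ) (z : ℝ) : ℝ :=
  eps1 n₁ n₂ *
    (-(n₁ : ℝ) * (13 * (n₁ : ℝ) ^ 2 * n₂ - 65 * (n₁ : ℝ) * (n₂ : ℝ) ^ 2 + (n₁ : ℝ) ^ 3 +
        19 * (n₂ : ℝ) ^ 3) +
      30 / z ^ 2 * ((n₁ : ℝ) * (n₂ : ℝ) ^ 2) * ((n₁ : ℝ) - n₂))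

/-- The coefficient `q¹⁰`. -/
noncomputable def q10 (n₁ n₂ : ℤ) (z : ℝ) : ℝ :=
  eps2 n₁ n₂ *
    (-(n₂ : ℝ) * (13 * (n₂ : ℝ) ^ 2 * n₁ - 65 * (n₂ : ℝ) * (n₁ : ℝ) ^ 2 + (n₂ : ℝ) ^ 3 +
        19 * (n₁ : ℝ) ^ 3) +
      30 / z ^ 2 * ((n₂ : ℝ) * (n₁ : ℝ) ^ 2) * ((n₂ : ℝ) - n₁))

/-- The coefficient `q¹¹`. -/
noncomputable def q11 (n₁ n₂ : ℤ) (z : ℝ) : ℝ :=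
  -4 * z * ((n₁ : ℝ) * n₂) * ((n₁ : ℝ) ^ 2 + (n₂ : ℝ) ^ 2 - 6 * n₁ * n₂) -
    (14 * (n₁ : ℝ) ^ 3 * n₂ - 94 * (n₁ : ℝ) ^ 2 * (n₂ : ℝ) ^ 2 + 14 * (n₁ : ℝ) * (n₂ : ℝ) ^ 3 +
      (n₁ : ℝ) ^ 4 + (n₂ : ℝ) ^ 4) / z

/-- The particular solution `f̂^P_{n₁,n₂}` for `n₁, n₂ ≠ 0`, `n₁ + n₂ ≠ 0`. -/
noncomputable def fP2 (n₁ n₂ : ℤ) (y : ℝ) : ℝ :=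
  32 * π * (sigma2 n₁.natAbs : ℝ) * (sigma2 n₂.natAbs : ℝ) /
      (3 * |((n₁ * n₂ : ℤ) : ℝ)| * |((n₁ + n₂ : ℤ) : ℝ)| ^ 5) *
    (q00 n₁ n₂ (π * |((n₁ + n₂ : ℤ) : ℝ)| * y) * K0 (2 * π * |(n₁ : ℝ)| * y) *
        K0 (2 * π * |(n₂ : ℝ)| * y) +
      q01 n₁ n₂ (π * |((n₁ + n₂ : ℤ) : ℝ)| * y) * K0 (2 * π * |(n₁ : ℝ)| * y) *
        K1 (2 * π * |(n₂ : ℝ)| * y) +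
      q10 n₁ n₂ (π * |((n₁ + n₂ : ℤ) : ℝ)| * y) * K1 (2 * π * |(n₁ : ℝ)| * y) *
        K0 (2 * π * |(n₂ : ℝ)| * y) +
      q11 n₁ n₂ (π * |((n₁ + n₂ : ℤ) : ℝ)| * y) * K1 (2 * π * |(n₁ : ℝ)| * y) *
        K1 (2 * π * |(n₂ : ℝ)| * y))

/-- Modified Bessel function `K_{7/2}`. -/
noncomputable def K7half (x : ℝ) : ℝ :=
  Real.sqrt (π / (2 * x)) * (1 + 6 / x + 15 / x ^ 2 + 15 / x ^ 3) * Real.exp (-x)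

/-- The homogeneous-solution coefficient `α_{n₁,n₂}`. -/
noncomputable def alphaN1N2 (n₁ n₂ : ℤ) : ℝ :=
  ((n₁ + n₂).sign : ℝ) *
    (128 * π * (sigma2 n₁.natAbs : ℝ) * (sigma2 n₂.natAbs : ℝ) /
      (45 * (n₁ : ℝ) ^ 2 * (n₂ : ℝ) ^ 2 * |((n₁ + n₂ : ℤ) : ℝ)| ^ ((7 : ℝ) / 2))) *
    ((n₁ : ℝ) ^ 5 + (n₂ : ℝ) ^ 5 + 15 * (n₁ : ℝ) ^ 4 * n₂ + 15 * (n₁ : ℝ) * (n₂ : ℝ) ^ 4 -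
      80 * (n₁ : ℝ) ^ 3 * (n₂ : ℝ) ^ 2 - 80 * (n₁ : ℝ) ^ 2 * (n₂ : ℝ) ^ 3 +
      60 * (n₁ : ℝ) ^ 2 * (n₂ : ℝ) ^ 2 * ((n₁ : ℝ) - n₂) * Real.log |(n₁ : ℝ) / (n₂ : ℝ)|)

/-!
The even extension of `K₀`, the odd extensions of `K₁` and of the elementary factor of `K_{7/2}`
absorb all the signs and absolute values of the mode, so with `t = 2πy` it suffices to treat an
expression in real parameters `a`, `b` that is rational in `a`, `b`, `t` up to these functions and
`log (a / b)`.

Differentiating under the integral gives `K₀' = -K₁` and `(x K₁)' = -x K₀`. Starting from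
`|x K₁ - 1| ≤ x`, integrating these relations in turn from `0` yields, for `L x = c - log x`,
`K₀ = L + x² (L + 1) / 4 + O(x³)` and `K₁ = 1/x - x (L + 1/2) / 2 + O(x^{5/2})`. The constant `c`
need not be known: inserting the expansions, the singular terms cancel by a rational identity in
`a`, `b`, `t`, `L (a t)` and `L (b t)`, given that `log (a / b) = L (b t) - L (a t)`.
-/

open Asymptotics Filter MeasureTheory Set Topology

section PowerOrder

variable {E : Type*} [NormedAddCommGroup E] {a p q r : ℝ}

lemma isBigO_rpow_rpow_nhdsGT_zero (h : p ≤ q) :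
    (fun x : ℝ ↦ x ^ q) =O[𝓝[>] 0] fun x ↦ x ^ p := by
  refine .of_bound 1 ?_
  filter_upwards [Ioc_mem_nhdsGT one_pos] with x ⟨hx, hx1⟩
  rw [one_mul, Real.norm_of_nonneg (by positivity), Real.norm_of_nonneg (by positivity)]
  exact Real.rpow_le_rpow_of_exponent_ge hx hx1 h

lemma isBigO_pow_rpow_natCast (n : ℕ) :
    (fun x : ℝ ↦ x ^ n) =O[𝓝[>] 0] fun x ↦ x ^ (n : ℝ) := by
  simpa only [Real.rpow_natCast] using isBigO_refl _ _

lemma isBigO_inv_rpow_neg_one : (fun x : ℝ ↦ x⁻¹) =O[𝓝[>] 0] fun x ↦ x ^ (-1 : ℝ) := by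
  simpa only [Real.rpow_neg_one] using isBigO_refl _ _

lemma isBigO_const_rpow_of_nonpos (c : ℝ) (hr : r ≤ 0) :
    (fun _ : ℝ ↦ c) =O[𝓝[>] 0] fun x ↦ x ^ r :=
  (isBigO_const_const c one_ne_zero _).trans <| by
    simpa only [Real.rpow_zero] using isBigO_rpow_rpow_nhdsGT_zero hr

lemma isBigO_mul_rpow_of_le {f g : ℝ → ℝ} (hf : f =O[𝓝[>] 0] fun x ↦ x ^ p)
    (hg : g =O[𝓝[>] 0] fun x ↦ x ^ q) (h : r ≤ p + q) :
    (fun x ↦ f x * g x) =O[𝓝[>] 0] fun x ↦ x ^ r := by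
  refine ((hf.mul hg).congr' .rfl ?_).trans (isBigO_rpow_rpow_nhdsGT_zero h)
  filter_upwards [self_mem_nhdsWithin] with x hx using (Real.rpow_add hx p q).symm

lemma isBigO_comp_abs_const_mul_rpow {f : ℝ → E} (ha : a ≠ 0)
    (hf : f =O[𝓝[>] 0] fun x ↦ x ^ r) :
    (fun t ↦ f |a * t|) =O[𝓝[>] 0] fun t ↦ t ^ r := by
  have ht : Tendsto (fun t ↦ |a * t|) (𝓝[>] 0) (𝓝[>] 0) := by
    refine tendsto_nhdsWithin_iff.2 ⟨?_, ?_⟩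
    · exact ((by fun_prop : Continuous fun t ↦ |a * t|).tendsto' 0 0 (by simp)).mono_left
        nhdsWithin_le_nhds
    · filter_upwards [self_mem_nhdsWithin] with t ht
      exact abs_pos.2 (mul_ne_zero ha (ne_of_gt ht))
  refine (hf.comp_tendsto ht).trans (.of_bound (|a| ^ r) ?_)
  filter_upwards [self_mem_nhdsWithin] with t (ht : 0 < t)
  rw [Function.comp_apply, abs_mul, abs_of_pos ht, Real.mul_rpow (abs_nonneg a) ht.le, norm_mul,
    Real.norm_of_nonneg (by positivity : 0 ≤ |a| ^ r)]

lemma tendsto_zero_of_isBigO_rpow {f : ℝ → E} (hr : 0 < r) (hf : f =O[𝓝[>] 0] fun x ↦ x ^ r) :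
    Tendsto f (𝓝[>] 0) (𝓝 0) := by
  refine hf.trans_tendsto (.mono_left ?_ nhdsWithin_le_nhds)
  simpa [Real.zero_rpow hr.ne'] using (Real.continuousAt_rpow_const 0 r (.inr hr.le)).tendsto

variable [NormedSpace ℝ E] {F F' : ℝ → E}

lemma exists_tendsto_of_isBigO_deriv_one [CompleteSpace E]
    (hF : ∀ x > 0, HasDerivAt F (F' x) x) (hF' : F' =O[𝓝[>] 0] fun _ ↦ (1 : ℝ)) :
    ∃ c, Tendsto F (𝓝[>] 0) (𝓝 c) := by
  obtain ⟨C, hC, hbound⟩ := hF'.exists_nonneg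
  obtain ⟨δ, hδ, hsub⟩ := mem_nhdsGT_iff_exists_Ioo_subset.1 hbound.bound
  have hLip : LipschitzOnWith ⟨C, hC⟩ F (Ioo 0 δ) :=
    (convex_Ioo 0 δ).lipschitzOnWith_of_nnnorm_hasDerivWithin_le
      (fun x hx ↦ (hF x hx.1).hasDerivWithinAt) fun x hx ↦
        NNReal.coe_le_coe.1 (by simpa using hsub hx : ‖F' x‖ ≤ C)
  exact cauchy_map_iff_exists_tendsto.1 <| (cauchy_nhds.mono nhdsWithin_le_nhds).map_of_le
    hLip.uniformContinuousOn (le_principal_iff.2 (Ioo_mem_nhdsGT hδ))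

lemma isBigO_rpow_add_one_of_isBigO_deriv (hr : 0 ≤ r) (hF : ∀ x > 0, HasDerivAt F (F' x) x)
    (hF' : F' =O[𝓝[>] 0] fun x ↦ x ^ r) (h0 : Tendsto F (𝓝[>] 0) (𝓝 0)) :
    F =O[𝓝[>] 0] fun x ↦ x ^ (r + 1) := by
  obtain ⟨C, hC, hbound⟩ := hF'.exists_nonneg
  obtain ⟨δ, hδ, hsub⟩ := mem_nhdsGT_iff_exists_Ioo_subset.1 hbound.bound
  refine .of_bound C ?_
  filter_upwards [Ioo_mem_nhdsGT hδ] with x hx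
  have hF'x : ∀ t ∈ Ioc 0 x, ‖F' t‖ ≤ C * x ^ r := fun t ht ↦ by
    have ht0 : 0 < t := ht.1
    refine (hsub ⟨ht.1, ht.2.trans_lt hx.2⟩ : ‖F' t‖ ≤ C * ‖t ^ r‖).trans ?_
    rw [Real.norm_of_nonneg (by positivity)]
    gcongr
    exact ht.2
  have hincr : ∀ᶠ s in 𝓝[>] 0, ‖F x - F s‖ ≤ C * x ^ r * x := by
    filter_upwards [Ioo_mem_nhdsGT hx.1] with s hs
    calc ‖F x - F s‖ ≤ C * x ^ r * ‖x - s‖ :=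
          (convex_Ioc 0 x).norm_image_sub_le_of_norm_hasDerivWithin_le
            (fun t ht ↦ (hF t ht.1).hasDerivWithinAt) hF'x ⟨hs.1, hs.2.le⟩ ⟨hx.1, le_rfl⟩
      _ ≤ C * x ^ r * x := by
          have hx0 : 0 < x := hx.1
          rw [Real.norm_of_nonneg (sub_nonneg.2 hs.2.le)]
          gcongr
          linarith [hs.1]
  have hlim : Tendsto (fun s ↦ ‖F x - F s‖) (𝓝[>] 0) (𝓝 ‖F x‖) := by
    simpa using (h0.const_sub (F x)).norm
  have hx0 : 0 < x := hx.1
  rw [Real.norm_of_nonneg (by positivity : 0 ≤ x ^ (r + 1)), Real.rpow_add_one hx0.ne',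
    ← mul_assoc]
  exact le_of_tendsto hlim hincr

end PowerOrder

section Bessel

variable {x : ℝ}

/-- The moments `∫₀^∞ e^{-x cosh t} coshᵏ t dt`. They contain `K₀` (`k = 0`) and `K₁` (`k = 1`), and
differentiation in `x` raises `k`. -/
noncomputable def coshMoment (k : ℕ) (x : ℝ) : ℝ :=
  ∫ t in Ioi (0 : ℝ), Real.exp (-x * Real.cosh t) * Real.cosh t ^ k

lemma coshMoment_zero : coshMoment 0 = K0 := by
  funext x
  simp only [coshMoment, K0, pow_zero, mul_one]

lemma coshMoment_one : coshMoment 1 = K1 := by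
  funext x
  simp only [coshMoment, K1, pow_one]

lemma exp_neg_mul_cosh_mul_cosh_pow_le (k : ℕ) (hx : 0 < x) (t : ℝ) :
    Real.exp (-x * Real.cosh t) * Real.cosh t ^ k ≤
      2 * (k + 1).factorial / x ^ (k + 1) * Real.exp (-t) := by
  have := Real.cosh_pos t
  have hpow : (x * Real.cosh t) ^ (k + 1) / (k + 1).factorial ≤ Real.exp (x * Real.cosh t) :=
    Real.pow_div_factorial_le_exp _ (by positivity) _
  have hhalf : Real.exp t / 2 ≤ Real.cosh t := by
    rw [Real.cosh_eq]
    linarith [Real.exp_pos (-t)]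
  calc Real.exp (-x * Real.cosh t) * Real.cosh t ^ k
      = Real.cosh t ^ k / Real.exp (x * Real.cosh t) := by
        rw [neg_mul, Real.exp_neg, mul_comm, div_eq_mul_inv]
    _ ≤ Real.cosh t ^ k / ((x * Real.cosh t) ^ (k + 1) / (k + 1).factorial) := by gcongr
    _ = (k + 1).factorial / x ^ (k + 1) * (1 / Real.cosh t) := by
        field_simp
        ring
    _ ≤ (k + 1).factorial / x ^ (k + 1) * (1 / (Real.exp t / 2)) := by gcongr
    _ = 2 * (k + 1).factorial / x ^ (k + 1) * Real.exp (-t) := by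
        rw [Real.exp_neg]
        field_simp

lemma integrableOn_exp_neg_mul_cosh_mul_cosh_pow (k : ℕ) (hx : 0 < x) :
    IntegrableOn (fun t ↦ Real.exp (-x * Real.cosh t) * Real.cosh t ^ k) (Ioi 0) := by
  refine ((integrableOn_exp_neg_Ioi 0).const_mul (2 * (k + 1).factorial / x ^ (k + 1))).mono'
    (by fun_prop : Continuous _).aestronglyMeasurable (.of_forall fun t ↦ ?_)
  have := Real.cosh_pos t
  rw [Real.norm_of_nonneg (by positivity)]
  exact exp_neg_mul_cosh_mul_cosh_pow_le k hx t

lemma tendsto_exp_neg_mul_cosh_mul_cosh_pow_atTop (k : ℕ) (hx : 0 < x) :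
    Tendsto (fun t ↦ Real.exp (-x * Real.cosh t) * Real.cosh t ^ k) atTop (𝓝 0) := by
  refine squeeze_zero (fun t ↦ ?_) (exp_neg_mul_cosh_mul_cosh_pow_le k hx) ?_
  · have := Real.cosh_pos t
    positivity
  · simpa using Real.tendsto_exp_neg_atTop_nhds_zero.const_mul
      (2 * (k + 1).factorial / x ^ (k + 1) : ℝ)

lemma abs_sinh_le_cosh (t : ℝ) : |Real.sinh t| ≤ Real.cosh t :=
  abs_le_of_sq_le_sq (by rw [Real.cosh_sq]; linarith) (Real.cosh_pos t).le

lemma norm_sinh_mul_exp_neg_mul_cosh_le (x t : ℝ) :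
    ‖Real.sinh t * Real.exp (-x * Real.cosh t)‖ ≤
      Real.exp (-x * Real.cosh t) * Real.cosh t ^ 1 := by
  rw [norm_mul, Real.norm_of_nonneg (Real.exp_pos _).le, mul_comm, pow_one]
  gcongr
  exact abs_sinh_le_cosh t

lemma integrableOn_sinh_mul_exp_neg_mul_cosh (hx : 0 < x) :
    IntegrableOn (fun t ↦ Real.sinh t * Real.exp (-x * Real.cosh t)) (Ioi 0) :=
  (integrableOn_exp_neg_mul_cosh_mul_cosh_pow 1 hx).mono'
    (by fun_prop : Continuous _).aestronglyMeasurable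
    (.of_forall fun t ↦ norm_sinh_mul_exp_neg_mul_cosh_le x t)

lemma hasDerivAt_exp_neg_mul_cosh (x t : ℝ) :
    HasDerivAt (fun t ↦ Real.exp (-x * Real.cosh t))
      (-x * (Real.sinh t * Real.exp (-x * Real.cosh t))) t :=
  ((Real.hasDerivAt_cosh t).const_mul (-x)).exp.congr_deriv (by ring)

lemma hasDerivAt_coshMoment (k : ℕ) (hx : 0 < x) :
    HasDerivAt (coshMoment k) (-coshMoment (k + 1) x) x := by
  rw [coshMoment, ← integral_neg]
  refine (hasDerivAt_integral_of_dominated_loc_of_deriv_le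
    (F := fun x t ↦ Real.exp (-x * Real.cosh t) * Real.cosh t ^ k)
    (bound := fun t ↦ Real.exp (-(x / 2) * Real.cosh t) * Real.cosh t ^ (k + 1))
    (s := Ioi (x / 2)) (Ioi_mem_nhds (half_lt_self hx))
    (.of_forall fun y ↦ (by fun_prop : Continuous _).aestronglyMeasurable)
    (integrableOn_exp_neg_mul_cosh_mul_cosh_pow k hx)
    (F' := fun x t ↦ -(Real.exp (-x * Real.cosh t) * Real.cosh t ^ (k + 1)))
    (by fun_prop : Continuous _).aestronglyMeasurable
    (.of_forall fun t y hy ↦ ?_)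
    (integrableOn_exp_neg_mul_cosh_mul_cosh_pow (k + 1) (half_pos hx))
    (.of_forall fun t y _ ↦ ?_)).2
  · have := Real.cosh_pos t
    rw [norm_neg, Real.norm_of_nonneg (by positivity)]
    gcongr
    exact (mem_Ioi.1 hy).le
  · have hexp : HasDerivAt (fun y ↦ Real.exp (-y * Real.cosh t))
        (Real.exp (-y * Real.cosh t) * (-1 * Real.cosh t)) y :=
      ((hasDerivAt_neg y).mul_const _).exp
    exact (hexp.mul_const (Real.cosh t ^ k)).congr_deriv (by ring)

lemma mul_coshMoment_two (hx : 0 < x) :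
    x * coshMoment 2 x = x * coshMoment 0 x + coshMoment 1 x := by
  have hint := fun k ↦ integrableOn_exp_neg_mul_cosh_mul_cosh_pow k hx
  have hderiv (t : ℝ) : HasDerivAt (fun t ↦ Real.sinh t * Real.exp (-x * Real.cosh t))
      (Real.exp (-x * Real.cosh t) * Real.cosh t ^ 1 +
        x * (Real.exp (-x * Real.cosh t) * Real.cosh t ^ 0) -
        x * (Real.exp (-x * Real.cosh t) * Real.cosh t ^ 2)) t := by
    refine ((Real.hasDerivAt_sinh t).mul (hasDerivAt_exp_neg_mul_cosh x t)).congr_deriv ?_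
    rw [Real.cosh_sq]
    ring
  have hint' : IntegrableOn (fun t ↦ Real.exp (-x * Real.cosh t) * Real.cosh t ^ 1 +
      x * (Real.exp (-x * Real.cosh t) * Real.cosh t ^ 0)) (Ioi 0) :=
    (hint 1).add ((hint 0).const_mul x)
  have hparts := integral_Ioi_of_hasDerivAt_of_tendsto (a := 0)
    (hderiv 0).continuousAt.continuousWithinAt (fun t _ ↦ hderiv t)
    (hint'.sub ((hint 2).const_mul x))
    (squeeze_zero_norm (norm_sinh_mul_exp_neg_mul_cosh_le x)
      (tendsto_exp_neg_mul_cosh_mul_cosh_pow_atTop 1 hx))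
  rw [integral_sub hint' ((hint 2).const_mul x),
    integral_add (hint 1) ((hint 0).const_mul x), integral_const_mul, integral_const_mul,
    Real.sinh_zero, zero_mul, sub_zero] at hparts
  simp only [coshMoment]
  linarith

lemma hasDerivAt_K0 (hx : 0 < x) : HasDerivAt K0 (-K1 x) x := by
  simpa only [coshMoment_zero, coshMoment_one, zero_add] using hasDerivAt_coshMoment 0 hx

lemma hasDerivAt_mul_K1 (hx : 0 < x) : HasDerivAt (fun x ↦ x * K1 x) (-(x * K0 x)) x := by
  rw [← coshMoment_one, ← coshMoment_zero]
  refine ((hasDerivAt_id x).mul (hasDerivAt_coshMoment 1 hx)).congr_deriv ?_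
  simp only [id_eq, one_mul, one_add_one_eq_two]
  linear_combination -mul_coshMoment_two hx

lemma mul_integral_sinh_mul_exp_neg_mul_cosh (hx : 0 < x) :
    x * ∫ t in Ioi (0 : ℝ), Real.sinh t * Real.exp (-x * Real.cosh t) = Real.exp (-x) := by
  have h := integral_Ioi_of_hasDerivAt_of_tendsto (a := 0)
    (hasDerivAt_exp_neg_mul_cosh x 0).continuousAt.continuousWithinAt
    (fun t _ ↦ hasDerivAt_exp_neg_mul_cosh x t)
    ((integrableOn_sinh_mul_exp_neg_mul_cosh hx).const_mul (-x))
    (by simpa only [pow_zero, mul_one] using tendsto_exp_neg_mul_cosh_mul_cosh_pow_atTop 0 hx)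
  rw [integral_const_mul, Real.cosh_zero, mul_one] at h
  linarith

-- `cosh t = sinh t + e⁻ᵗ`, where the `sinh t` part integrates exactly to `e⁻ˣ / x`.
lemma mul_K1_eq (hx : 0 < x) :
    x * K1 x =
      Real.exp (-x) + x * ∫ t in Ioi (0 : ℝ), Real.exp (-x * Real.cosh t) * Real.exp (-t) := by
  have hcosh := integrableOn_exp_neg_mul_cosh_mul_cosh_pow 1 hx
  have hdiff : K1 x - ∫ t in Ioi (0 : ℝ), Real.sinh t * Real.exp (-x * Real.cosh t) =
      ∫ t in Ioi (0 : ℝ), Real.exp (-x * Real.cosh t) * Real.exp (-t) := by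
    rw [← coshMoment_one, coshMoment,
      ← integral_sub hcosh (integrableOn_sinh_mul_exp_neg_mul_cosh hx)]
    congr with t
    rw [← Real.cosh_sub_sinh]
    ring
  rw [← hdiff, ← mul_integral_sinh_mul_exp_neg_mul_cosh hx]
  ring

lemma abs_mul_K1_sub_one_le (hx : 0 < x) : |x * K1 x - 1| ≤ x := by
  have hle (t : ℝ) : Real.exp (-x * Real.cosh t) * Real.exp (-t) ≤
      Real.exp (-x) * Real.exp (-t) := by
    gcongr
    nlinarith [Real.one_le_cosh t]
  have hint : IntegrableOn (fun t ↦ Real.exp (-x) * Real.exp (-t)) (Ioi 0) :=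
    (integrableOn_exp_neg_Ioi 0).const_mul _
  have hnonneg : 0 ≤ ∫ t in Ioi (0 : ℝ), Real.exp (-x * Real.cosh t) * Real.exp (-t) :=
    integral_nonneg fun t ↦ by positivity
  have hupper : ∫ t in Ioi (0 : ℝ), Real.exp (-x * Real.cosh t) * Real.exp (-t) ≤
      Real.exp (-x) := by
    calc ∫ t in Ioi (0 : ℝ), Real.exp (-x * Real.cosh t) * Real.exp (-t)
        ≤ ∫ t in Ioi (0 : ℝ), Real.exp (-x) * Real.exp (-t) :=
          integral_mono_of_nonneg (.of_forall fun t ↦ by positivity) hint (.of_forall hle)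
      _ = Real.exp (-x) := by rw [integral_const_mul, integral_exp_neg_Ioi_zero, mul_one]
  rw [mul_K1_eq hx, abs_le]
  constructor
  · nlinarith [Real.one_sub_le_exp_neg x]
  · nlinarith [Real.exp_le_one_iff.2 (neg_nonpos.2 hx.le)]

end Bessel

section SmallArgument

variable {x r : ℝ}

/-- The constant term of `K₀` at the origin, i.e. the limit of `K₀ x + log x` as `x → 0⁺`. Its value
`log 2 - γ` is irrelevant here, as it drops out of the singular terms of the mode. -/
noncomputable def besselConst : ℝ := limUnder (𝓝[>] 0) fun x ↦ K0 x + Real.log x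

/-- The leading term of `K₀` at the origin. It is an even function, as `Real.log` is. -/
noncomputable def logPart (x : ℝ) : ℝ := besselConst - Real.log x

/-- The two-term approximation of `K₀` at the origin, extended to negative arguments as an even
function. -/
noncomputable def K0Approx (x : ℝ) : ℝ := logPart x + x ^ 2 / 4 * (logPart x + 1)

/-- The two-term approximation of `K₁` at the origin, extended to negative arguments as an odd
function. -/
noncomputable def K1Approx (x : ℝ) : ℝ := x⁻¹ - x / 2 * (logPart x + 1 / 2)

lemma isBigO_K1_sub_inv_one : (fun x ↦ K1 x - x⁻¹) =O[𝓝[>] 0] fun _ ↦ (1 : ℝ) := by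
  refine .of_bound 1 ?_
  filter_upwards [self_mem_nhdsWithin] with x (hx : 0 < x)
  have hdiv : K1 x - x⁻¹ = (x * K1 x - 1) / x := by field_simp
  rw [hdiv, norm_div, Real.norm_of_nonneg hx.le, norm_one, mul_one, div_le_one hx]
  exact abs_mul_K1_sub_one_le hx

lemma tendsto_mul_K1 : Tendsto (fun x ↦ x * K1 x) (𝓝[>] 0) (𝓝 1) := by
  refine tendsto_iff_norm_sub_tendsto_zero.2 (squeeze_zero' (.of_forall fun _ ↦ norm_nonneg _)
    (eventually_mem_nhdsWithin.mono fun _ ↦ abs_mul_K1_sub_one_le)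
    (tendsto_id.mono_left nhdsWithin_le_nhds))

lemma tendsto_K0_add_log :
    Tendsto (fun x ↦ K0 x + Real.log x) (𝓝[>] 0) (𝓝 besselConst) :=
  tendsto_nhds_limUnder <| exists_tendsto_of_isBigO_deriv_one
    (fun _ hx ↦ (hasDerivAt_K0 hx).add (Real.hasDerivAt_log (ne_of_gt hx)))
    (isBigO_K1_sub_inv_one.neg_left.congr_left fun x ↦ by ring)

lemma tendsto_K0_sub_logPart : Tendsto (fun x ↦ K0 x - logPart x) (𝓝[>] 0) (𝓝 0) := by
  refine (sub_self besselConst ▸ tendsto_K0_add_log.sub_const besselConst).congr fun x ↦ ?_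
  rw [logPart]
  ring

lemma hasDerivAt_logPart (hx : x ≠ 0) : HasDerivAt logPart (-x⁻¹) x :=
  (Real.hasDerivAt_log hx).const_sub besselConst

lemma isBigO_logPart_add_const (d : ℝ) :
    (fun x ↦ logPart x + d) =O[𝓝[>] 0] fun x ↦ x ^ (-1 / 2 : ℝ) := by
  have hlog : Real.log =O[𝓝[>] 0] fun x ↦ x ^ (-1 / 2 : ℝ) :=
    (isLittleO_log_rpow_nhdsGT_zero (by norm_num)).isBigO
  refine ((isBigO_const_rpow_of_nonpos (besselConst + d) (by norm_num)).sub hlog).congr_left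
    fun x ↦ ?_
  rw [logPart]
  ring

lemma isBigO_logPart : logPart =O[𝓝[>] 0] fun x ↦ x ^ (-1 / 2 : ℝ) :=
  (isBigO_logPart_add_const 0).congr_left fun _ ↦ add_zero _

lemma isBigO_K0Approx_sub_logPart :
    (fun x ↦ K0Approx x - logPart x) =O[𝓝[>] 0] fun x ↦ x ^ (3 / 2 : ℝ) := by
  refine ((isBigO_mul_rpow_of_le (isBigO_pow_rpow_natCast 2) (isBigO_logPart_add_const 1)
    (r := 3 / 2) (by norm_num)).const_mul_left (1 / 4)).congr_left fun x ↦ ?_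
  rw [K0Approx]
  ring

lemma isBigO_K1Approx_sub_inv :
    (fun x ↦ K1Approx x - x⁻¹) =O[𝓝[>] 0] fun x ↦ x ^ (1 / 2 : ℝ) := by
  refine ((isBigO_mul_rpow_of_le (isBigO_pow_rpow_natCast 1) (isBigO_logPart_add_const (1 / 2))
    (r := 1 / 2) (by norm_num)).const_mul_left (-1 / 2)).congr_left fun x ↦ ?_
  rw [K1Approx]
  ring

lemma isBigO_K0_sub_logPart_rpow_one :
    (fun x ↦ K0 x - logPart x) =O[𝓝[>] 0] fun x ↦ x ^ (1 : ℝ) := by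
  rw [← zero_add (1 : ℝ)]
  refine isBigO_rpow_add_one_of_isBigO_deriv le_rfl
    (fun x hx ↦ (hasDerivAt_K0 hx).sub (hasDerivAt_logPart (ne_of_gt hx))) ?_ tendsto_K0_sub_logPart
  simp only [Real.rpow_zero]
  exact isBigO_K1_sub_inv_one.neg_left.congr_left fun x ↦ by ring

lemma hasDerivAt_mul_K1Approx (hx : x ≠ 0) :
    HasDerivAt (fun x ↦ x * K1Approx x) (-(x * logPart x)) x := by
  refine ((hasDerivAt_id x).mul ((hasDerivAt_inv hx).sub (((hasDerivAt_id x).div_const 2).mul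
    ((hasDerivAt_logPart hx).add_const (1 / 2))))).congr_deriv ?_
  simp only [id_eq, Pi.sub_apply, Pi.mul_apply]
  field_simp
  ring

lemma hasDerivAt_K0Approx (hx : x ≠ 0) : HasDerivAt K0Approx (-K1Approx x) x := by
  refine ((hasDerivAt_logPart hx).add (((hasDerivAt_pow 2 x).div_const 4).mul
    ((hasDerivAt_logPart hx).add_const 1))).congr_deriv ?_
  rw [K1Approx]
  field_simp
  ring

lemma isBigO_K1_sub_K1Approx_of_K0 (hr : 0 ≤ r)
    (h : (fun x ↦ K0 x - logPart x) =O[𝓝[>] 0] fun x ↦ x ^ r) :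
    (fun x ↦ K1 x - K1Approx x) =O[𝓝[>] 0] fun x ↦ x ^ (r + 1) := by
  have hderiv : (fun x ↦ -(x * K0 x) - -(x * logPart x)) =O[𝓝[>] 0] fun x ↦ x ^ (r + 1) :=
    (isBigO_mul_rpow_of_le (isBigO_pow_rpow_natCast 1) h (r := r + 1)
      (by norm_num [add_comm])).neg_left.congr_left fun x ↦ by ring
  have hApprox : Tendsto (fun x ↦ x * K1Approx x) (𝓝[>] 0) (𝓝 1) := by
    have h0 : Tendsto (fun x ↦ x * (K1Approx x - x⁻¹)) (𝓝[>] 0) (𝓝 0) :=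
      tendsto_zero_of_isBigO_rpow one_pos <|
        isBigO_mul_rpow_of_le ((isBigO_pow_rpow_natCast 1).congr_left pow_one)
          isBigO_K1Approx_sub_inv (by norm_num)
    refine (zero_add (1 : ℝ) ▸ h0.add_const 1).congr' ?_
    filter_upwards [self_mem_nhdsWithin] with x (hx : 0 < x)
    field_simp
    ring
  have hmul : (fun x ↦ x * K1 x - x * K1Approx x) =O[𝓝[>] 0] fun x ↦ x ^ (r + 1 + 1) :=
    isBigO_rpow_add_one_of_isBigO_deriv (by linarith)
      (fun x hx ↦ (hasDerivAt_mul_K1 hx).sub (hasDerivAt_mul_K1Approx (ne_of_gt hx))) hderiv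
      (sub_self (1 : ℝ) ▸ tendsto_mul_K1.sub hApprox)
  refine (isBigO_mul_rpow_of_le isBigO_inv_rpow_neg_one hmul (r := r + 1) (by linarith)).congr'
    ?_ .rfl
  filter_upwards [self_mem_nhdsWithin] with x (hx : 0 < x)
  field_simp

lemma isBigO_K0_sub_K0Approx :
    (fun x ↦ K0 x - K0Approx x) =O[𝓝[>] 0] fun x ↦ x ^ (3 : ℝ) := by
  rw [(by norm_num : (3 : ℝ) = 1 + 1 + 1)]
  refine isBigO_rpow_add_one_of_isBigO_deriv (by norm_num)
    (fun x hx ↦ (hasDerivAt_K0 hx).sub (hasDerivAt_K0Approx (ne_of_gt hx)))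
    ((isBigO_K1_sub_K1Approx_of_K0 zero_le_one isBigO_K0_sub_logPart_rpow_one).neg_left.congr_left
      fun x ↦ by ring) ?_
  simpa using tendsto_K0_sub_logPart.sub
    (tendsto_zero_of_isBigO_rpow (by norm_num) isBigO_K0Approx_sub_logPart)

lemma isBigO_K0_sub_logPart :
    (fun x ↦ K0 x - logPart x) =O[𝓝[>] 0] fun x ↦ x ^ (3 / 2 : ℝ) :=
  ((isBigO_K0_sub_K0Approx.trans (isBigO_rpow_rpow_nhdsGT_zero (by norm_num))).add
    isBigO_K0Approx_sub_logPart).congr_left fun _ ↦ sub_add_sub_cancel _ _ _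

lemma isBigO_K1_sub_K1Approx :
    (fun x ↦ K1 x - K1Approx x) =O[𝓝[>] 0] fun x ↦ x ^ (5 / 2 : ℝ) := by
  rw [(by norm_num : (5 / 2 : ℝ) = 3 / 2 + 1)]
  exact isBigO_K1_sub_K1Approx_of_K0 (by norm_num) isBigO_K0_sub_logPart

lemma isBigO_K1_sub_inv :
    (fun x ↦ K1 x - x⁻¹) =O[𝓝[>] 0] fun x ↦ x ^ (1 / 2 : ℝ) :=
  ((isBigO_K1_sub_K1Approx.trans (isBigO_rpow_rpow_nhdsGT_zero (by norm_num))).add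
    isBigO_K1Approx_sub_inv).congr_left fun _ ↦ sub_add_sub_cancel _ _ _

/-- The factor of `K_{7/2} x` beside `√(π / (2 x))`. -/
noncomputable def reducedK7half (x : ℝ) : ℝ :=
  (1 + 6 / x + 15 / x ^ 2 + 15 / x ^ 3) * Real.exp (-x)

lemma isBigO_exp_neg_sub_div_pow_three :
    (fun x ↦ (Real.exp (-x) - (1 - x + x ^ 2 / 2)) / x ^ 3) =O[𝓝[>] 0] fun _ ↦ (1 : ℝ) := by
  have hneg : Tendsto (fun x : ℝ ↦ -x) (𝓝[>] 0) (𝓝 0) :=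
    (continuous_neg.tendsto' 0 0 neg_zero).mono_left nhdsWithin_le_nhds
  have hexp : (fun x ↦ Real.exp (-x) - (1 - x + x ^ 2 / 2)) =O[𝓝[>] 0] fun x ↦ (-x) ^ 3 := by
    refine ((Real.exp_sub_sum_range_isBigO_pow 3).comp_tendsto hneg).congr_left fun x ↦ ?_
    simp [Finset.sum_range_succ, sub_eq_add_neg]
  refine (isBigO_one_iff ℝ).2 ?_
  simpa [Odd.neg_pow (by decide : Odd 3)] using div_isBoundedUnder_of_isBigO hexp

lemma isBigO_reducedK7half_sub :
    (fun x ↦ reducedK7half x - (15 / x ^ 3 - 3 / (2 * x))) =O[𝓝[>] 0] fun _ ↦ (1 : ℝ) := by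
  have hcont {p : ℝ → ℝ} (hp : Continuous p) : p =O[𝓝[>] 0] fun _ ↦ (1 : ℝ) :=
    (hp.continuousAt.isBigO_one ℝ).mono nhdsWithin_le_nhds
  refine ((hcont (by fun_prop : Continuous fun x : ℝ ↦ 5 / 2 + 2 * x + x ^ 2 / 2)).add
    (((hcont (by fun_prop : Continuous fun x : ℝ ↦ x ^ 3 + 6 * x ^ 2 + 15 * x + 15)).mul
      isBigO_exp_neg_sub_div_pow_three).congr_right fun _ ↦ one_mul 1)).congr' ?_ .rfl
  filter_upwards [self_mem_nhdsWithin] with x (hx : 0 < x)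
  rw [reducedK7half]
  field_simp
  ring

end SmallArgument

section Parity

variable {f g : ℝ → ℝ} {a r : ℝ}

/-- The odd extension of a function on `(0, ∞)` to the line. Together with the even extension
`x ↦ f |x|`, it absorbs the signs attached to the Bessel functions of `|n₁|` and `|n₂|`. -/
noncomputable def oddExt (f : ℝ → ℝ) (x : ℝ) : ℝ := Real.sign x * f |x|

lemma comp_abs_eq_of_even (hg : g.Even) (x : ℝ) : g |x| = g x := by
  obtain hx | hx := abs_choice x
  · rw [hx]
  · rw [hx, hg]

lemma oddExt_eq_of_odd (hg : g.Odd) (x : ℝ) : oddExt g x = g x := by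
  obtain hx | rfl | hx := lt_trichotomy x 0
  · rw [oddExt, Real.sign_of_neg hx, abs_of_neg hx, hg, neg_one_mul, neg_neg]
  · rw [oddExt, Real.sign_zero, zero_mul, hg.map_zero]
  · rw [oddExt, Real.sign_of_pos hx, abs_of_pos hx, one_mul]

lemma isBigO_comp_abs_sub_of_even (ha : a ≠ 0) (hg : g.Even)
    (h : (fun x ↦ f x - g x) =O[𝓝[>] 0] fun x ↦ x ^ r) :
    (fun t ↦ f |a * t| - g (a * t)) =O[𝓝[>] 0] fun t ↦ t ^ r :=
  (isBigO_comp_abs_const_mul_rpow ha h).congr_left fun t ↦ by rw [comp_abs_eq_of_even hg]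

lemma isBigO_oddExt_sub_of_odd (ha : a ≠ 0) (hg : g.Odd)
    (h : (fun x ↦ f x - g x) =O[𝓝[>] 0] fun x ↦ x ^ r) :
    (fun t ↦ oddExt f (a * t) - g (a * t)) =O[𝓝[>] 0] fun t ↦ t ^ r := by
  refine .trans (isBigO_of_le _ fun t ↦ ?_) (isBigO_comp_abs_const_mul_rpow ha h)
  rw [← oddExt_eq_of_odd hg, oddExt, oddExt, ← mul_sub, norm_mul]
  refine mul_le_of_le_one_left (norm_nonneg _) ?_
  obtain h | h | h := Real.sign_apply_eq (a * t) <;> norm_num [h]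

lemma even_logPart : logPart.Even := fun x ↦ by rw [logPart, logPart, Real.log_neg_eq_log]

lemma even_K0Approx : K0Approx.Even := fun x ↦ by rw [K0Approx, K0Approx, even_logPart, neg_sq]

lemma odd_K1Approx : K1Approx.Odd := fun x ↦ by
  rw [K1Approx, K1Approx, even_logPart, inv_neg]
  ring

lemma logPart_const_mul_sub {b t : ℝ} (ha : a ≠ 0) (hb : b ≠ 0) (ht : t ≠ 0) :
    logPart (b * t) - logPart (a * t) = Real.log (a / b) := by
  rw [logPart, logPart, Real.log_mul hb ht, Real.log_mul ha ht, Real.log_div ha hb]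
  ring

end Parity

section Products

variable {f f₀ f₁ g g₀ g₁ w₀ w₁ : ℝ → ℝ} {a b p p₀ p₁ q q₀ q₁ r : ℝ}

-- `f g - (f₁ g₀ + f₀ g₁ - f₀ g₀) = (f - f₀) (g - g₀) + (f - f₁) g₀ + f₀ (g - g₁)`.
lemma isBigO_mul_sub_two_term
    (hff₀ : (fun t ↦ f t - f₀ t) =O[𝓝[>] 0] fun t ↦ t ^ p)
    (hgg₀ : (fun t ↦ g t - g₀ t) =O[𝓝[>] 0] fun t ↦ t ^ q)
    (hff₁ : (fun t ↦ f t - f₁ t) =O[𝓝[>] 0] fun t ↦ t ^ p₁)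
    (hgg₁ : (fun t ↦ g t - g₁ t) =O[𝓝[>] 0] fun t ↦ t ^ q₁)
    (hf₀ : f₀ =O[𝓝[>] 0] fun t ↦ t ^ p₀) (hg₀ : g₀ =O[𝓝[>] 0] fun t ↦ t ^ q₀)
    (h : r ≤ p + q) (h₁ : r ≤ p₁ + q₀) (h₀ : r ≤ p₀ + q₁) :
    (fun t ↦ f t * g t - (f₁ t * g₀ t + f₀ t * g₁ t - f₀ t * g₀ t)) =O[𝓝[>] 0] fun t ↦ t ^ r :=
  (((isBigO_mul_rpow_of_le hff₀ hgg₀ h).add (isBigO_mul_rpow_of_le hff₁ hg₀ h₁)).add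
    (isBigO_mul_rpow_of_le hf₀ hgg₁ h₀)).congr_left fun t ↦ by ring

lemma isBigO_mul_sub_one_term
    (hff₀ : (fun t ↦ f t - f₀ t) =O[𝓝[>] 0] fun t ↦ t ^ p)
    (hgg₀ : (fun t ↦ g t - g₀ t) =O[𝓝[>] 0] fun t ↦ t ^ q)
    (hf₀ : f₀ =O[𝓝[>] 0] fun t ↦ t ^ p₀) (hg₀ : g₀ =O[𝓝[>] 0] fun t ↦ t ^ q₀)
    (h : r ≤ p + q) (h₁ : r ≤ p + q₀) (h₀ : r ≤ p₀ + q) :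
    (fun t ↦ f t * g t - f₀ t * g₀ t) =O[𝓝[>] 0] fun t ↦ t ^ r :=
  (isBigO_mul_sub_two_term hff₀ hgg₀ hff₀ hgg₀ hf₀ hg₀ h h₁ h₀).congr_left fun t ↦ by ring

lemma isBigO_add_mul_sub_one
    (hw₁ : w₁ =O[𝓝[>] 0] fun t ↦ t ^ p₁) (hw₀ : w₀ =O[𝓝[>] 0] fun t ↦ t ^ p₀)
    (hff₁ : (fun t ↦ f t - f₁ t) =O[𝓝[>] 0] fun t ↦ t ^ q₁)
    (hff₀ : (fun t ↦ f t - f₀ t) =O[𝓝[>] 0] fun t ↦ t ^ q₀) (h₁ : 0 ≤ p₁ + q₁) (h₀ : 0 ≤ p₀ + q₀) :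
    (fun t ↦ (w₁ t + w₀ t) * f t - (w₁ t * f₁ t + w₀ t * f₀ t)) =O[𝓝[>] 0] fun _ ↦ (1 : ℝ) :=
  ((isBigO_mul_rpow_of_le hw₁ hff₁ h₁).add (isBigO_mul_rpow_of_le hw₀ hff₀ h₀)).congr
    (fun t ↦ by ring) fun t ↦ Real.rpow_zero t

lemma isBigO_inv_const_mul (a : ℝ) :
    (fun t : ℝ ↦ (a * t)⁻¹) =O[𝓝[>] 0] fun t ↦ t ^ (-1 : ℝ) :=
  (isBigO_inv_rpow_neg_one.const_mul_left a⁻¹).congr_left fun t ↦ (mul_inv a t).symm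

lemma isBigO_logPart_const_mul (ha : a ≠ 0) :
    (fun t ↦ logPart (a * t)) =O[𝓝[>] 0] fun t ↦ t ^ (-1 / 2 : ℝ) :=
  (isBigO_comp_abs_const_mul_rpow ha isBigO_logPart).congr_left fun _ ↦
    comp_abs_eq_of_even even_logPart _

lemma isBigO_K0_abs_sub_logPart (ha : a ≠ 0) :
    (fun t ↦ K0 |a * t| - logPart (a * t)) =O[𝓝[>] 0] fun t ↦ t ^ (3 / 2 : ℝ) :=
  isBigO_comp_abs_sub_of_even ha even_logPart isBigO_K0_sub_logPart

lemma isBigO_K0_abs_sub_K0Approx (ha : a ≠ 0) :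
    (fun t ↦ K0 |a * t| - K0Approx (a * t)) =O[𝓝[>] 0] fun t ↦ t ^ (3 : ℝ) :=
  isBigO_comp_abs_sub_of_even ha even_K0Approx isBigO_K0_sub_K0Approx

lemma isBigO_oddExt_K1_sub_inv (ha : a ≠ 0) :
    (fun t ↦ oddExt K1 (a * t) - (a * t)⁻¹) =O[𝓝[>] 0] fun t ↦ t ^ (1 / 2 : ℝ) :=
  isBigO_oddExt_sub_of_odd ha (fun _ ↦ inv_neg) isBigO_K1_sub_inv

lemma isBigO_oddExt_K1_sub_K1Approx (ha : a ≠ 0) :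
    (fun t ↦ oddExt K1 (a * t) - K1Approx (a * t)) =O[𝓝[>] 0] fun t ↦ t ^ (5 / 2 : ℝ) :=
  isBigO_oddExt_sub_of_odd ha odd_K1Approx isBigO_K1_sub_K1Approx

lemma isBigO_K0_mul_K0_sub (ha : a ≠ 0) (hb : b ≠ 0) :
    (fun t ↦ K0 |a * t| * K0 |b * t| - logPart (a * t) * logPart (b * t))
      =O[𝓝[>] 0] fun t ↦ t ^ (1 : ℝ) :=
  isBigO_mul_sub_one_term (isBigO_K0_abs_sub_logPart ha) (isBigO_K0_abs_sub_logPart hb)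
    (isBigO_logPart_const_mul ha) (isBigO_logPart_const_mul hb)
    (by norm_num) (by norm_num) (by norm_num)

lemma isBigO_K0_mul_K0 (ha : a ≠ 0) (hb : b ≠ 0) :
    (fun t ↦ K0 |a * t| * K0 |b * t|) =O[𝓝[>] 0] fun t ↦ t ^ (-1 : ℝ) :=
  (((isBigO_K0_mul_K0_sub ha hb).trans (isBigO_rpow_rpow_nhdsGT_zero (by norm_num))).add
    (isBigO_mul_rpow_of_le (isBigO_logPart_const_mul ha) (isBigO_logPart_const_mul hb)
      (by norm_num))).congr_left fun _ ↦ sub_add_cancel _ _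

lemma isBigO_K0_mul_K1_sub_one_term (ha : a ≠ 0) (hb : b ≠ 0) :
    (fun t ↦ K0 |a * t| * oddExt K1 (b * t) - logPart (a * t) * (b * t)⁻¹)
      =O[𝓝[>] 0] fun t ↦ t ^ (0 : ℝ) :=
  isBigO_mul_sub_one_term (isBigO_K0_abs_sub_logPart ha) (isBigO_oddExt_K1_sub_inv hb)
    (isBigO_logPart_const_mul ha) (isBigO_inv_const_mul b)
    (by norm_num) (by norm_num) (by norm_num)

lemma isBigO_K0_mul_K1_sub_two_term (ha : a ≠ 0) (hb : b ≠ 0) :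
    (fun t ↦ K0 |a * t| * oddExt K1 (b * t) - (K0Approx (a * t) * (b * t)⁻¹ +
        logPart (a * t) * K1Approx (b * t) - logPart (a * t) * (b * t)⁻¹))
      =O[𝓝[>] 0] fun t ↦ t ^ (2 : ℝ) :=
  isBigO_mul_sub_two_term (isBigO_K0_abs_sub_logPart ha) (isBigO_oddExt_K1_sub_inv hb)
    (isBigO_K0_abs_sub_K0Approx ha) (isBigO_oddExt_K1_sub_K1Approx hb)
    (isBigO_logPart_const_mul ha) (isBigO_inv_const_mul b)
    (by norm_num) (by norm_num) (by norm_num)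

lemma isBigO_K1_mul_K1_sub_one_term (ha : a ≠ 0) (hb : b ≠ 0) :
    (fun t ↦ oddExt K1 (a * t) * oddExt K1 (b * t) - (a * t)⁻¹ * (b * t)⁻¹)
      =O[𝓝[>] 0] fun t ↦ t ^ (-1 : ℝ) :=
  isBigO_mul_sub_one_term (isBigO_oddExt_K1_sub_inv ha) (isBigO_oddExt_K1_sub_inv hb)
    (isBigO_inv_const_mul a) (isBigO_inv_const_mul b)
    (by norm_num) (by norm_num) (by norm_num)

lemma isBigO_K1_mul_K1_sub_two_term (ha : a ≠ 0) (hb : b ≠ 0) :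
    (fun t ↦ oddExt K1 (a * t) * oddExt K1 (b * t) - (K1Approx (a * t) * (b * t)⁻¹ +
        (a * t)⁻¹ * K1Approx (b * t) - (a * t)⁻¹ * (b * t)⁻¹))
      =O[𝓝[>] 0] fun t ↦ t ^ (1 : ℝ) :=
  isBigO_mul_sub_two_term (isBigO_oddExt_K1_sub_inv ha) (isBigO_oddExt_K1_sub_inv hb)
    (isBigO_oddExt_K1_sub_K1Approx ha) (isBigO_oddExt_K1_sub_K1Approx hb)
    (isBigO_inv_const_mul a) (isBigO_inv_const_mul b)
    (by norm_num) (by norm_num) (by norm_num)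

end Products

section RealMode

variable {a b : ℝ}

/-- The coefficient `q⁰⁰` for real parameters, without its sign factor. -/
noncomputable def coeff00 (a b z : ℝ) : ℝ :=
  -30 * (a * b) * (a - b) ^ 2 / z + -4 * (a * b) * (a ^ 2 + b ^ 2 - 6 * a * b) * z

/-- The coefficient `q⁰¹` for real parameters, without its sign factor; `q¹⁰` is obtained by
exchanging `a` and `b`. -/
noncomputable def coeff01 (a b z : ℝ) : ℝ :=
  30 * (a * b ^ 2) * (a - b) / z ^ 2 +
    -a * (13 * a ^ 2 * b - 65 * a * b ^ 2 + a ^ 3 + 19 * b ^ 3)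

/-- The coefficient `q¹¹` for real parameters. -/
noncomputable def coeff11 (a b z : ℝ) : ℝ :=
  -(14 * a ^ 3 * b - 94 * a ^ 2 * b ^ 2 + 14 * a * b ^ 3 + a ^ 4 + b ^ 4) / z +
    -4 * (a * b) * (a ^ 2 + b ^ 2 - 6 * a * b) * z

/-- The terms of `coeff00 * K₀ * K₀` that are unbounded at the origin. -/
noncomputable def singular00 (a b t : ℝ) : ℝ :=
  -30 * (a * b) * (a - b) ^ 2 / ((a + b) / 2 * t) * (logPart (a * t) * logPart (b * t))

/-- The terms of `coeff01 * K₀ * K₁` that are unbounded at the origin. -/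
noncomputable def singular01 (a b t : ℝ) : ℝ :=
  30 * (a * b ^ 2) * (a - b) / ((a + b) / 2 * t) ^ 2 *
      (K0Approx (a * t) * (b * t)⁻¹ + logPart (a * t) * K1Approx (b * t) -
        logPart (a * t) * (b * t)⁻¹) +
    -a * (13 * a ^ 2 * b - 65 * a * b ^ 2 + a ^ 3 + 19 * b ^ 3) * (logPart (a * t) * (b * t)⁻¹)

/-- The terms of `coeff11 * K₁ * K₁` that are unbounded at the origin. -/
noncomputable def singular11 (a b t : ℝ) : ℝ :=
  -(14 * a ^ 3 * b - 94 * a ^ 2 * b ^ 2 + 14 * a * b ^ 3 + a ^ 4 + b ^ 4) / ((a + b) / 2 * t) *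
      (K1Approx (a * t) * (b * t)⁻¹ + (a * t)⁻¹ * K1Approx (b * t) - (a * t)⁻¹ * (b * t)⁻¹) +
    -4 * (a * b) * (a ^ 2 + b ^ 2 - 6 * a * b) * ((a + b) / 2 * t) * ((a * t)⁻¹ * (b * t)⁻¹)

/-- The coefficient `α` for real parameters, divided by `16π σ₂(|n₁|) σ₂(|n₂|)`. No absolute
value appears inside the logarithm, as `Real.log` is even. -/
noncomputable def homCoeff (a b : ℝ) : ℝ :=
  4 / (45 * a ^ 2 * b ^ 2 * (a + b) ^ 4) *
    (a ^ 5 + b ^ 5 + 15 * a ^ 4 * b + 15 * a * b ^ 4 - 80 * a ^ 3 * b ^ 2 - 80 * a ^ 2 * b ^ 3 +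
      60 * a ^ 2 * b ^ 2 * (a - b) * Real.log (a / b))

/-- The particular solution for real parameters in the variable `t = 2πy`, divided by
`16π σ₂(|n₁|) σ₂(|n₂|)`. -/
noncomputable def besselPart (a b t : ℝ) : ℝ :=
  2 / (3 * (a * b) * (a + b) ^ 5) *
    (coeff00 a b ((a + b) / 2 * t) * (K0 |a * t| * K0 |b * t|) +
      coeff01 a b ((a + b) / 2 * t) * (K0 |a * t| * oddExt K1 (b * t)) +
      coeff01 b a ((b + a) / 2 * t) * (K0 |b * t| * oddExt K1 (a * t)) +
      coeff11 a b ((a + b) / 2 * t) * (oddExt K1 (a * t) * oddExt K1 (b * t)))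

lemma isBigO_div_const_mul_pow (c d : ℝ) (n : ℕ) :
    (fun t : ℝ ↦ c / (d * t) ^ n) =O[𝓝[>] 0] fun t ↦ t ^ (-n : ℝ) := by
  refine .trans ?_ ((isBigO_refl (fun t : ℝ ↦ (t ^ n)⁻¹) _).congr' .rfl ?_)
  · refine (isBigO_const_mul_self (c / d ^ n) _ _).congr_left fun t ↦ ?_
    rw [mul_pow]
    ring
  · filter_upwards [self_mem_nhdsWithin] with t (ht : 0 < t)
    rw [Real.rpow_neg ht.le, Real.rpow_natCast]

lemma isBigO_div_const_mul (c d : ℝ) :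
    (fun t : ℝ ↦ c / (d * t)) =O[𝓝[>] 0] fun t ↦ t ^ (-1 : ℝ) := by
  simpa only [pow_one, Nat.cast_one] using isBigO_div_const_mul_pow c d 1

lemma isBigO_const_mul_const_mul (c d : ℝ) :
    (fun t : ℝ ↦ c * (d * t)) =O[𝓝[>] 0] fun t ↦ t ^ (1 : ℝ) := by
  refine ((isBigO_refl _ _).const_mul_left (c * d)).congr_left fun t ↦ ?_
  rw [Real.rpow_one, mul_assoc]

lemma isBigO_coeff00_mul_sub (ha : a ≠ 0) (hb : b ≠ 0) :
    (fun t ↦ coeff00 a b ((a + b) / 2 * t) * (K0 |a * t| * K0 |b * t|) - singular00 a b t)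
      =O[𝓝[>] 0] fun _ ↦ (1 : ℝ) := by
  refine (isBigO_add_mul_sub_one
    (isBigO_div_const_mul (-30 * (a * b) * (a - b) ^ 2) ((a + b) / 2))
    (isBigO_const_mul_const_mul (-4 * (a * b) * (a ^ 2 + b ^ 2 - 6 * a * b)) ((a + b) / 2))
    (isBigO_K0_mul_K0_sub ha hb) (f₀ := 0) ((isBigO_K0_mul_K0 ha hb).congr_left fun _ ↦ ?_)
    (by norm_num) (by norm_num)).congr_left fun t ↦ ?_
  · rw [Pi.zero_apply, sub_zero]
  · rw [coeff00, singular00, Pi.zero_apply, mul_zero, add_zero]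

lemma isBigO_coeff01_mul_sub (ha : a ≠ 0) (hb : b ≠ 0) :
    (fun t ↦ coeff01 a b ((a + b) / 2 * t) * (K0 |a * t| * oddExt K1 (b * t)) - singular01 a b t)
      =O[𝓝[>] 0] fun _ ↦ (1 : ℝ) :=
  isBigO_add_mul_sub_one (isBigO_div_const_mul_pow _ _ 2) (isBigO_const_rpow_of_nonpos _ le_rfl)
    (isBigO_K0_mul_K1_sub_two_term ha hb) (isBigO_K0_mul_K1_sub_one_term ha hb)
    (by norm_num) (by norm_num)

lemma isBigO_coeff11_mul_sub (ha : a ≠ 0) (hb : b ≠ 0) :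
    (fun t ↦ coeff11 a b ((a + b) / 2 * t) * (oddExt K1 (a * t) * oddExt K1 (b * t)) -
        singular11 a b t) =O[𝓝[>] 0] fun _ ↦ (1 : ℝ) :=
  isBigO_add_mul_sub_one (isBigO_div_const_mul _ _) (isBigO_const_mul_const_mul _ _)
    (isBigO_K1_mul_K1_sub_two_term ha hb) (isBigO_K1_mul_K1_sub_one_term ha hb)
    (by norm_num) (by norm_num)

lemma isBigO_oddExt_reducedK7half_sub {c : ℝ} (hc : c ≠ 0) :
    (fun t ↦ oddExt reducedK7half (c * t) - (15 / (c * t) ^ 3 - 3 / (2 * (c * t))))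
      =O[𝓝[>] 0] fun _ ↦ (1 : ℝ) := by
  have hodd : Function.Odd fun x : ℝ ↦ 15 / x ^ 3 - 3 / (2 * x) := fun x ↦ by
    ring
  simpa only [Real.rpow_zero] using
    isBigO_oddExt_sub_of_odd hc hodd (r := 0) (by simpa only [Real.rpow_zero] using
      isBigO_reducedK7half_sub)

lemma singular_terms_eq {t : ℝ} (ha : a ≠ 0) (hb : b ≠ 0) (hab : a + b ≠ 0) (ht : t ≠ 0) :
    2 / (3 * (a * b) * (a + b) ^ 5) *
        (singular00 a b t + singular01 a b t + singular01 b a t + singular11 a b t) +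
      homCoeff a b * (15 / ((a + b) * t) ^ 3 - 3 / (2 * ((a + b) * t))) =
    1 / (5 * a ^ 2 * b ^ 2 * t) := by
  rw [homCoeff, ← logPart_const_mul_sub ha hb ht]
  simp only [singular00, singular01, singular11, K0Approx, K1Approx, add_comm b a]
  generalize logPart (a * t) = L
  generalize logPart (b * t) = M
  field_simp
  ring

theorem isBigO_besselPart_add_homCoeff_mul_sub (ha : a ≠ 0) (hb : b ≠ 0) (hab : a + b ≠ 0) :
    (fun t ↦ besselPart a b t + homCoeff a b * oddExt reducedK7half ((a + b) * t) -
      1 / (5 * a ^ 2 * b ^ 2 * t)) =O[𝓝[>] 0] fun _ ↦ (1 : ℝ) := by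
  have hbessel := (((isBigO_coeff00_mul_sub ha hb).add (isBigO_coeff01_mul_sub ha hb)).add
    (isBigO_coeff01_mul_sub hb ha)).add (isBigO_coeff11_mul_sub ha hb)
  refine ((hbessel.const_mul_left (2 / (3 * (a * b) * (a + b) ^ 5))).add
    ((isBigO_oddExt_reducedK7half_sub hab).const_mul_left (homCoeff a b))).congr' ?_ .rfl
  filter_upwards [self_mem_nhdsWithin] with t ht
  rw [← singular_terms_eq ha hb hab (ne_of_gt ht), besselPart]
  ring

end RealMode

section IntegerMode

variable {n₁ n₂ : ℤ} {y z : ℝ}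

/-- The common factor `16π σ₂(|n₁|) σ₂(|n₂|)` of the particular and of the homogeneous solution. -/
noncomputable def modeConst (n₁ n₂ : ℤ) : ℝ :=
  16 * π * (sigma2 n₁.natAbs : ℝ) * (sigma2 n₂.natAbs : ℝ)

lemma apply_abs_eq_sign_mul_oddExt (f : ℝ → ℝ) (hz : z ≠ 0) :
    f |z| = Real.sign z * oddExt f z := by
  obtain h | h := Real.sign_apply_eq_of_ne_zero z hz <;> simp [oddExt, h]

lemma sign_mul_of_pos {c : ℝ} (hc : 0 < c) (z : ℝ) : Real.sign (z * c) = Real.sign z := by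
  obtain hz | rfl | hz := lt_trichotomy z 0
  · rw [Real.sign_of_neg hz, Real.sign_of_neg (mul_neg_of_neg_of_pos hz hc)]
  · rw [zero_mul]
  · rw [Real.sign_of_pos hz, Real.sign_of_pos (mul_pos hz hc)]

lemma q00_abs (n₁ n₂ : ℤ) (z : ℝ) :
    q00 n₁ n₂ |z| = Real.sign n₁ * Real.sign n₂ * Real.sign z * coeff00 n₁ n₂ z := by
  rw [q00, coeff00, Int.sign_mul, Int.cast_mul, ← Real.sign_intCast, ← Real.sign_intCast]
  obtain hz | rfl | hz := lt_trichotomy z 0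
  · rw [Real.sign_of_neg hz, abs_of_neg hz]
    ring
  · simp
  · rw [Real.sign_of_pos hz, abs_of_pos hz]
    ring

lemma q11_abs (n₁ n₂ : ℤ) (z : ℝ) : q11 n₁ n₂ |z| = Real.sign z * coeff11 n₁ n₂ z := by
  rw [q11, coeff11]
  obtain hz | rfl | hz := lt_trichotomy z 0
  · rw [Real.sign_of_neg hz, abs_of_neg hz]
    ring
  · simp
  · rw [Real.sign_of_pos hz, abs_of_pos hz]
    ring

lemma eps1_eq_sign_mul_sign (n₁ n₂ : ℤ) :
    eps1 n₁ n₂ = Real.sign n₁ * Real.sign ((n₁ + n₂ : ℤ) : ℝ) := by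
  rw [eps1, Real.sign_intCast, Real.sign_intCast, ← Int.cast_mul]
  split_ifs with hpos
  · obtain ⟨h₁, h₂⟩ | ⟨h₁, h₂⟩ := mul_pos_iff.1 hpos
    · rw [Int.sign_eq_one_of_pos h₁, Int.sign_eq_one_of_pos (add_pos h₁ h₂)]
      norm_num
    · rw [Int.sign_eq_neg_one_of_neg h₁, Int.sign_eq_neg_one_of_neg (add_neg h₁ h₂)]
      norm_num
  · rfl

lemma q01_abs (n₁ n₂ : ℤ) (z : ℝ) :
    q01 n₁ n₂ |z| =
      Real.sign n₁ * Real.sign ((n₁ + n₂ : ℤ) : ℝ) * coeff01 n₁ n₂ z := by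
  rw [q01, coeff01, sq_abs, eps1_eq_sign_mul_sign]
  ring

lemma q10_eq_q01_swap (n₁ n₂ : ℤ) (z : ℝ) : q10 n₁ n₂ z = q01 n₂ n₁ z := by
  rw [q10, q01, eps1, eps2, mul_comm n₂, add_comm n₂]

lemma sign_mul_div_abs {a b c : ℝ} (ha : a ≠ 0) (hb : b ≠ 0) (hc : c ≠ 0) :
    Real.sign a * Real.sign b * Real.sign c / (|a * b| * |c| ^ 5) = 1 / (a * b * c ^ 5) := by
  rw [abs_mul]
  obtain ha | ha := ha.lt_or_gt <;> obtain hb | hb := hb.lt_or_gt <;>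
    obtain hc | hc := hc.lt_or_gt <;>
    simp only [Real.sign_of_neg, Real.sign_of_pos, abs_of_neg, abs_of_pos, ha, hb, hc] <;>
    ring

lemma fP2_eq_besselPart (h₁ : n₁ ≠ 0) (h₂ : n₂ ≠ 0) (h : n₁ + n₂ ≠ 0) (hy : 0 < y) :
    fP2 n₁ n₂ y = modeConst n₁ n₂ * besselPart n₁ n₂ (2 * π * y) := by
  have ht : 0 < 2 * π * y := by positivity
  have h₁' : (n₁ : ℝ) ≠ 0 := Int.cast_ne_zero.2 h₁
  have h₂' : (n₂ : ℝ) ≠ 0 := Int.cast_ne_zero.2 h₂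
  have habs (c : ℝ) : 2 * π * |c| * y = |c * (2 * π * y)| := by
    rw [abs_mul, abs_of_pos ht]
    ring
  have hz : π * |((n₁ + n₂ : ℤ) : ℝ)| * y = |((n₁ + n₂ : ℤ) : ℝ) / 2 * (2 * π * y)| := by
    rw [abs_mul, abs_of_pos ht, abs_div, abs_two]
    ring
  have hzsign : Real.sign (((n₁ + n₂ : ℤ) : ℝ) / 2 * (2 * π * y)) =
      Real.sign ((n₁ + n₂ : ℤ) : ℝ) := by
    rw [sign_mul_of_pos ht, div_eq_mul_inv, sign_mul_of_pos (by norm_num)]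
  have hfactor : modeConst n₁ n₂ * (2 / (3 * (n₁ * n₂) * ((n₁ + n₂ : ℤ) : ℝ) ^ 5)) =
      32 * π * (sigma2 n₁.natAbs : ℝ) * (sigma2 n₂.natAbs : ℝ) /
        (3 * |((n₁ * n₂ : ℤ) : ℝ)| * |((n₁ + n₂ : ℤ) : ℝ)| ^ 5) *
        (Real.sign n₁ * Real.sign n₂ * Real.sign ((n₁ + n₂ : ℤ) : ℝ)) := by
    have hsign := sign_mul_div_abs h₁' h₂' (Int.cast_ne_zero.2 h : ((n₁ + n₂ : ℤ) : ℝ) ≠ 0)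
    rw [modeConst, Int.cast_mul]
    linear_combination
      -(32 / 3 * π * (sigma2 n₁.natAbs : ℝ) * (sigma2 n₂.natAbs : ℝ)) * hsign
  rw [besselPart, ← mul_assoc, ← Int.cast_add, ← Int.cast_add, hfactor, fP2, hz, habs, habs,
    q10_eq_q01_swap, add_comm n₂ n₁, q00_abs, q01_abs, q01_abs, q11_abs, add_comm n₂ n₁, hzsign,
    apply_abs_eq_sign_mul_oddExt K1 (mul_ne_zero h₁' ht.ne'),
    apply_abs_eq_sign_mul_oddExt K1 (mul_ne_zero h₂' ht.ne'), sign_mul_of_pos ht,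
    sign_mul_of_pos ht]
  ring

lemma sqrt_mul_K7half {c : ℝ} (hc : 0 < c) (hy : 0 < y) :
    √y * K7half (2 * π * c * y) = reducedK7half (2 * π * c * y) / (2 * √c) := by
  have hsqrt : √y * √(π / (2 * (2 * π * c * y))) = 1 / (2 * √c) := by
    rw [← Real.sqrt_mul hy.le, Real.sqrt_eq_iff_mul_self_eq_of_pos (by positivity)]
    field_simp
    rw [Real.sq_sqrt hc.le]
  rw [K7half, reducedK7half, mul_assoc √(π / _), ← mul_assoc, hsqrt]
  ring

lemma alphaN1N2_div_sqrt (h : n₁ + n₂ ≠ 0) :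
    alphaN1N2 n₁ n₂ / (2 * √|((n₁ + n₂ : ℤ) : ℝ)|) =
      modeConst n₁ n₂ * (homCoeff n₁ n₂ * Real.sign ((n₁ + n₂ : ℤ) : ℝ)) := by
  have hpos : 0 < |((n₁ + n₂ : ℤ) : ℝ)| := abs_pos.2 (Int.cast_ne_zero.2 h)
  have hpow : |((n₁ + n₂ : ℤ) : ℝ)| ^ (7 / 2 : ℝ) * √|((n₁ + n₂ : ℤ) : ℝ)| =
      ((n₁ + n₂ : ℤ) : ℝ) ^ 4 := by
    rw [Real.sqrt_eq_rpow, ← Real.rpow_add hpos, ← Even.pow_abs (by decide : Even 4)]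
    norm_num
  rw [alphaN1N2, homCoeff, modeConst, Real.log_abs, ← Int.cast_add, ← hpow, Real.sign_intCast]
  ring

lemma alphaN1N2_mul_K7half (h : n₁ + n₂ ≠ 0) (hy : 0 < y) :
    alphaN1N2 n₁ n₂ * √y * K7half (2 * π * |((n₁ + n₂ : ℤ) : ℝ)| * y) =
      modeConst n₁ n₂ *
        (homCoeff n₁ n₂ * oddExt reducedK7half ((n₁ + n₂) * (2 * π * y))) := by
  have ht : 0 < 2 * π * y := by positivity
  have hpos : 0 < |((n₁ + n₂ : ℤ) : ℝ)| := abs_pos.2 (Int.cast_ne_zero.2 h)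
  rw [oddExt, ← Int.cast_add, sign_mul_of_pos ht, abs_mul, abs_of_pos ht, mul_assoc,
    sqrt_mul_K7half hpos hy, ← mul_assoc (homCoeff _ _), ← mul_assoc (modeConst _ _),
    ← alphaN1N2_div_sqrt h, show 2 * π * |((n₁ + n₂ : ℤ) : ℝ)| * y =
      |((n₁ + n₂ : ℤ) : ℝ)| * (2 * π * y) by ring]
  ring

lemma mode_sub_eq (h₁ : n₁ ≠ 0) (h₂ : n₂ ≠ 0) (h : n₁ + n₂ ≠ 0) (hy : 0 < y) :
    (fP2 n₁ n₂ y + alphaN1N2 n₁ n₂ * √y * K7half (2 * π * |((n₁ + n₂ : ℤ) : ℝ)| * y)) -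
        8 * (sigma2 n₁.natAbs : ℝ) * (sigma2 n₂.natAbs : ℝ) /
          (5 * (n₁ : ℝ) ^ 2 * (n₂ : ℝ) ^ 2 * y) =
      modeConst n₁ n₂ * (besselPart n₁ n₂ (2 * π * y) +
        homCoeff n₁ n₂ * oddExt reducedK7half ((n₁ + n₂) * (2 * π * y)) -
        1 / (5 * (n₁ : ℝ) ^ 2 * (n₂ : ℝ) ^ 2 * (2 * π * y))) := by
  rw [fP2_eq_besselPart h₁ h₂ h hy, alphaN1N2_mul_K7half h hy, modeConst]
  field_simp
  ring

end IntegerMode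

/-- the complete mode `f̂_{n₁,n₂}` differs from
`8σ₂(|n₁|)σ₂(|n₂|)/(5 n₁² n₂² y)` by a bounded quantity as `y → 0⁺`. -/
theorem mode_n1n2_small_y (n₁ n₂ : ℤ) (h₁ : n₁ ≠ 0) (h₂ : n₂ ≠ 0) (h : n₁ + n₂ ≠ 0) :
    ∃ C : ℝ, ∀ᶠ y in nhdsWithin (0 : ℝ) (Set.Ioi 0),
      |(fP2 n₁ n₂ y +
          alphaN1N2 n₁ n₂ * Real.sqrt y * K7half (2 * π * |((n₁ + n₂ : ℤ) : ℝ)| * y)) -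
        8 * (sigma2 n₁.natAbs : ℝ) * (sigma2 n₂.natAbs : ℝ) /
          (5 * (n₁ : ℝ) ^ 2 * (n₂ : ℝ) ^ 2 * y)| ≤ C := by
  have hreal := isBigO_besselPart_add_homCoeff_mul_sub (a := n₁) (b := n₂)
    (Int.cast_ne_zero.2 h₁) (Int.cast_ne_zero.2 h₂) (mod_cast h)
  have hscale : Tendsto (fun y ↦ 2 * π * y) (𝓝[>] 0) (𝓝[>] 0) :=
    tendsto_iff_comap.2 (comap_mulLeft_nhdsGT_zero (by positivity)).ge
  obtain ⟨C, hC⟩ := ((hreal.comp_tendsto hscale).const_mul_left (modeConst n₁ n₂)).bound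
  refine ⟨C, ?_⟩
  filter_upwards [hC, self_mem_nhdsWithin] with y hbound hy
  rw [mode_sub_eq h₁ h₂ h hy]
  simpa using hbound
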